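/- Let A, B : [0,T] → ℝ be continuous, C² on [0,T), such that {A, B} forms an ET-system with accuracy one on [0,T) and A(t)B'(t) − A'(t)B(t) has constant sign on [0,T). Then every non-zero limit cycle of the Abel equation x' = A(t)x³ + B(t)x² has multiplicity at most two: if x is a non-zero closed solution with initial value x₀ and P'(x₀) = 1, then P''(x₀) ≠ 0; moreover P''(x₀) > 0 (the limit cycle is lower-stable and upper-unstable) when A'(t)B(t) − A(t)B'(t) > 0 on [0,T), and P''(x₀) < 0 (lower-unstable and upper-stable) when A'(t)B(t) − A(t)B'(t) < 0 on [0,T). -/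

import Mathlib

/-!
Let `x` be a nonzero closed solution with multiplier `1` and put `E(t) = exp ∫₀ᵗ A x²`.

*Second derivative.* The difference of two solutions solves a linear equation, which gives
`P y - P (x 0) = (y - x 0) exp ∫ abelQuot` exactly. Expanding the exponent in `y - x 0` yields
`P'(x 0) = u T` and `P''(x 0) = 2 ∫ (3 A x + B) u` with `u = exp ∫ (3 A x² + 2 B x)`
(`poincare_derivs`). Since `x² E` satisfies the same linear equation as `u`, we have
`x² E = (x 0)² u`, and `E T = 1`.

*Convexity.* The planar curve `(q, p) = (-1/E, x/E)` is therefore closed, and its velocity is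
`(x²/E) (A, B)`. The sign of `A' B - A B'` makes the tangent turn monotonically, and the
two-zeros hypothesis bounds its total turning by one turn, so the curve is convex. In the form used
here (`exists_chord`): if the line `p = a + b q` joins the points where `q` is extremal, then
`A (p - a - b q)` has the constant sign of `A' B - A B'`. This follows from a Rolle argument for
functions with `F 0 = F T` (`no_three_equal_values`).

*Conclusion.* `(3 A x + B) x² E` differs from `A x² E² (p - a - b q)` by the derivative of
`x E + a E²/2 - b E`, which has equal values at `0` and `T`. Hence `P''(x 0)` has the sign of
`A' B - A B'` (`integral_sign`). The weight `x²/E` is positive for either sign of `x`.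
-/

open Set intervalIntegral

noncomputable section

/-- `x` is a solution of the Abel equation `x' = A(t) x^3 + B(t) x^2` on `[0,T]`. -/
def AbelSol (A B : ℝ → ℝ) (T : ℝ) (x : ℝ → ℝ) : Prop :=
  ∀ t ∈ Set.Icc (0:ℝ) T,
    HasDerivWithinAt x (A t * x t ^ 3 + B t * x t ^ 2) (Set.Icc (0:ℝ) T) t

/-- A closed solution of the Abel equation on `[0,T]`. -/
def ClosedSol (A B : ℝ → ℝ) (T : ℝ) (x : ℝ → ℝ) : Prop :=
  AbelSol A B T x ∧ x 0 = x T

/-- A limit cycle: an isolated closed solution (isolated among initial values of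
closed solutions). -/
def LimitCycle (A B : ℝ → ℝ) (T : ℝ) (x : ℝ → ℝ) : Prop :=
  ClosedSol A B T x ∧
    ∃ ε > (0:ℝ), ∀ y : ℝ → ℝ, ClosedSol A B T y → |y 0 - x 0| < ε → y 0 = x 0

/-- The set of initial values of limit cycles of the Abel equation. -/
def LCInits (A B : ℝ → ℝ) (T : ℝ) : Set ℝ :=
  {v | ∃ x : ℝ → ℝ, LimitCycle A B T x ∧ x 0 = v}

/-- `g` has a zero of multiplicity at least `m` at `t` (derivatives taken within `E`). -/
def ZeroOrderGe (E : Set ℝ) (g : ℝ → ℝ) (t : ℝ) (m : ℕ) : Prop :=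
  ∀ k < m, iteratedDerivWithin k g E t = 0

/-- `g` has at most `n` zeros on `E`, counted with multiplicities. -/
def AtMostZerosOn (E : Set ℝ) (g : ℝ → ℝ) (n : ℕ) : Prop :=
  ∀ (S : Finset ℝ) (m : ℝ → ℕ),
    (∀ t ∈ S, t ∈ E ∧ 1 ≤ m t ∧ ZeroOrderGe E g t (m t)) →
      (∑ t ∈ S, m t) ≤ n

/-- `{f₀, f₁, f₂}` is an ET-system on `E`: linearly independent on `E`, and every
nontrivial linear combination has at most two zeros on `E` counted with multiplicities. -/
def IsETSystem3 (E : Set ℝ) (f₀ f₁ f₂ : ℝ → ℝ) : Prop :=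
  (∀ a b c : ℝ, (∀ t ∈ E, a * f₀ t + b * f₁ t + c * f₂ t = 0) → a = 0 ∧ b = 0 ∧ c = 0) ∧
  ∀ a b c : ℝ, ¬(a = 0 ∧ b = 0 ∧ c = 0) →
    AtMostZerosOn E (fun t => a * f₀ t + b * f₁ t + c * f₂ t) 2

/-- `{A, B}` is an ET-system with accuracy one on `E`: linearly independent on `E`, and
every nontrivial linear combination has at most two zeros on `E` counted with
multiplicities. -/
def IsETAcc1 (E : Set ℝ) (A B : ℝ → ℝ) : Prop :=
  (∀ l m : ℝ, (∀ t ∈ E, l * A t + m * B t = 0) → l = 0 ∧ m = 0) ∧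
  ∀ l m : ℝ, ¬(l = 0 ∧ m = 0) → AtMostZerosOn E (fun t => l * A t + m * B t) 2

/-- `P` is a Poincaré (time-`T`) map of the Abel equation on the set `U` of initial
values. -/
def IsPoincareOn (A B : ℝ → ℝ) (T : ℝ) (P : ℝ → ℝ) (U : Set ℝ) : Prop :=
  ∀ y ∈ U, ∃ z : ℝ → ℝ, AbelSol A B T z ∧ z 0 = y ∧ z T = P y

/-! ### A Rolle argument for periodic functions -/

lemma sign_of_ne_zero {f : ℝ → ℝ} {a b : ℝ} (hf : ContinuousOn f (Ioo a b))
    (h0 : ∀ t ∈ Ioo a b, f t ≠ 0) :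
    (∀ t ∈ Ioo a b, 0 < f t) ∨ (∀ t ∈ Ioo a b, f t < 0) := by
  by_contra hcon
  push Not at hcon
  obtain ⟨⟨t, ht, h1⟩, s, hs, h2⟩ := hcon
  obtain ⟨r, hr, h⟩ := isPreconnected_Ioo.intermediate_value ht hs hf (show (0:ℝ) ∈ _ from ⟨h1, h2⟩)
  exact h0 r hr h

lemma lt_of_derivAt_pos {F f : ℝ → ℝ} {T : ℝ} (hF : ContinuousOn F (Icc 0 T))
    (hd : ∀ t ∈ Ioo 0 T, HasDerivAt F (f t) t) {a b : ℝ} (ha : 0 ≤ a) (hab : a < b) (hb : b ≤ T)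
    (hpos : ∀ t ∈ Ioo a b, 0 < f t) : F a < F b := by
  refine strictMonoOn_of_deriv_pos (convex_Icc a b) (hF.mono (Icc_subset_Icc ha hb)) ?_
    (left_mem_Icc.2 hab.le) (right_mem_Icc.2 hab.le) hab
  intro t ht
  rw [interior_Icc] at ht
  rw [(hd t ⟨ha.trans_lt ht.1, ht.2.trans_le hb⟩).deriv]
  exact hpos t ht

lemma gt_of_derivAt_neg {F f : ℝ → ℝ} {T : ℝ} (hF : ContinuousOn F (Icc 0 T))
    (hd : ∀ t ∈ Ioo 0 T, HasDerivAt F (f t) t) {a b : ℝ} (ha : 0 ≤ a) (hab : a < b) (hb : b ≤ T)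
    (hneg : ∀ t ∈ Ioo a b, f t < 0) : F b < F a := by
  have := lt_of_derivAt_pos (F := fun t => -F t) (f := fun t => -f t) hF.neg
    (fun t ht => (hd t ht).neg) ha hab hb (fun t ht => by simpa using hneg t ht)
  simpa using this

/-- The case of `no_three_equal_values` in which `F` increases up to the first critical point. -/
lemma no_three_equal_values_aux {F f : ℝ → ℝ} {T : ℝ} (hF : ContinuousOn F (Icc 0 T))
    (hd : ∀ t ∈ Ioo 0 T, HasDerivAt F (f t) t) (hf : ContinuousOn f (Ioo 0 T))
    (hper : F 0 = F T) {t₁ t₂ t₃ r₁ r₂ : ℝ} (h0 : 0 ≤ t₁) (h3 : t₃ < T)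
    (h₁₂ : F t₁ = F t₂) (h₂₃ : F t₂ = F t₃) (hr₁ : r₁ ∈ Ioo t₁ t₂) (hr₂ : r₂ ∈ Ioo t₂ t₃)
    (hne : ∀ t ∈ Ioo 0 T, t ≠ r₁ → t ≠ r₂ → f t ≠ 0)
    (hpos : ∀ t ∈ Ioo 0 r₁, 0 < f t) : False := by
  obtain ⟨a1, a2⟩ := hr₁
  obtain ⟨b1, b2⟩ := hr₂
  have e1 : F t₁ < F r₁ := lt_of_derivAt_pos hF hd h0 a1 (by linarith)
    fun t ht => hpos t ⟨h0.trans_lt ht.1, ht.2⟩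
  have e0 : F 0 ≤ F t₁ := by
    rcases h0.eq_or_lt with h | h
    · rw [h]
    · exact (lt_of_derivAt_pos hF hd le_rfl h (by linarith)
        fun t ht => hpos t ⟨ht.1, ht.2.trans a1⟩).le
  have e2 : F r₂ < F t₂ := by
    rcases sign_of_ne_zero (f := f) (a := r₁) (b := r₂)
      (hf.mono (Ioo_subset_Ioo (by linarith) (by linarith)))
      (fun t ht => hne t ⟨by linarith [ht.1], by linarith [ht.2]⟩ ht.1.ne' ht.2.ne) with h | h
    · have := lt_of_derivAt_pos hF hd (by linarith) a2 (by linarith)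
        fun t ht => h t ⟨ht.1, ht.2.trans b1⟩
      linarith
    · exact gt_of_derivAt_neg hF hd (by linarith) b1 (by linarith)
        fun t ht => h t ⟨a2.trans ht.1, ht.2⟩
  have e3 : F t₃ < F T := by
    rcases sign_of_ne_zero (f := f) (a := r₂) (b := T)
      (hf.mono (Ioo_subset_Ioo (by linarith) le_rfl))
      (fun t ht => hne t ⟨by linarith [ht.1], ht.2⟩ (by linarith [ht.1] : r₁ < t).ne'
        ht.1.ne') with h | h
    · exact lt_of_derivAt_pos hF hd (by linarith) h3 le_rfl
        fun t ht => h t ⟨b2.trans ht.1, ht.2⟩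
    · have := gt_of_derivAt_neg hF hd (by linarith) b2 (by linarith)
        fun t ht => h t ⟨ht.1, ht.2.trans h3⟩
      linarith
  linarith

/-- If `F 0 = F T` and `F'` has at most two zeros in `(0,T)`, then `F` takes no value three times
on `[0,T)`. Two zeros of `F'` come from Rolle's theorem, the monotonicity of `F` outside of them is
then incompatible with `F 0 = F T`. -/
lemma no_three_equal_values {F f : ℝ → ℝ} {T : ℝ} (hF : ContinuousOn F (Icc 0 T))
    (hd : ∀ t ∈ Ioo 0 T, HasDerivAt F (f t) t) (hf : ContinuousOn f (Ioo 0 T))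
    (hper : F 0 = F T)
    (hz : ∀ a ∈ Ioo 0 T, ∀ b ∈ Ioo 0 T, ∀ c ∈ Ioo 0 T, f a = 0 → f b = 0 → f c = 0 →
      a = b ∨ a = c ∨ b = c)
    {t₁ t₂ t₃ : ℝ} (h0 : 0 ≤ t₁) (h12 : t₁ < t₂) (h23 : t₂ < t₃) (h3 : t₃ < T)
    (h₁₂ : F t₁ = F t₂) (h₂₃ : F t₂ = F t₃) : False := by
  obtain ⟨r₁, hr₁, hf₁⟩ := exists_hasDerivAt_eq_zero h12
    (hF.mono (Icc_subset_Icc h0 (by linarith))) h₁₂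
    (fun t ht => hd t ⟨by linarith [ht.1], by linarith [ht.2]⟩)
  obtain ⟨r₂, hr₂, hf₂⟩ := exists_hasDerivAt_eq_zero h23
    (hF.mono (Icc_subset_Icc (by linarith) (by linarith))) h₂₃
    (fun t ht => hd t ⟨by linarith [ht.1], by linarith [ht.2]⟩)
  have m₁ : r₁ ∈ Ioo 0 T := ⟨by linarith [hr₁.1], by linarith [hr₁.2]⟩
  have m₂ : r₂ ∈ Ioo 0 T := ⟨by linarith [hr₂.1], by linarith [hr₂.2]⟩
  have hlt : r₁ < r₂ := hr₁.2.trans hr₂.1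
  have hne : ∀ t ∈ Ioo 0 T, t ≠ r₁ → t ≠ r₂ → f t ≠ 0 := by
    intro t ht n1 n2 h
    rcases hz t ht r₁ m₁ r₂ m₂ h hf₁ hf₂ with h | h | h
    exacts [n1 h, n2 h, hlt.ne h]
  rcases sign_of_ne_zero (f := f) (a := 0) (b := r₁)
    (hf.mono (Ioo_subset_Ioo le_rfl m₁.2.le))
    (fun t ht => hne t ⟨ht.1, ht.2.trans m₁.2⟩ ht.2.ne (ht.2.trans hlt).ne) with h | h
  · exact no_three_equal_values_aux hF hd hf hper h0 h3 h₁₂ h₂₃ hr₁ hr₂ hne h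
  · exact no_three_equal_values_aux (F := fun t => -F t) (f := fun t => -f t) hF.neg
      (fun t ht => (hd t ht).neg) hf.neg (by simp [hper]) h0 h3 (by simp [h₁₂]) (by simp [h₂₃])
      hr₁ hr₂ (by simpa using hne) (by simpa using h)

/-! ### Convexity of the planar curve with velocity `w • (A, B)` -/

/-- Near a common simple zero `s`, the sign of `f * g` is that of `f' s * g' s`. -/
lemma eventually_mul_pos {f g : ℝ → ℝ} {f' g' s σ : ℝ} (hf : HasDerivAt f f' s)
    (hg : HasDerivAt g g' s) (f0 : f s = 0) (g0 : g s = 0) (h : 0 < σ * (f' * g')) :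
    ∀ᶠ t in nhdsWithin s {s}ᶜ, 0 < σ * (f t * g t) := by
  have := ((hasDerivAt_iff_tendsto_slope.1 hf).mul
    (hasDerivAt_iff_tendsto_slope.1 hg)).const_mul σ
  filter_upwards [this.eventually (lt_mem_nhds h), self_mem_nhdsWithin] with t ht hts
  have hts' : t - s ≠ 0 := sub_ne_zero.2 hts
  have e : σ * (f t * g t) = σ * (slope f s t * slope g s t) * (t - s) ^ 2 := by
    simp only [slope_def_field, f0, g0]
    field_simp
    ring
  rw [e]
  positivity

lemma pos_of_ne_zero_of_eventually {f : ℝ → ℝ} {a b s : ℝ} (hab : a < b) (hs : s = a ∨ s = b)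
    (hf : ContinuousOn f (Ioo a b)) (h0 : ∀ t ∈ Ioo a b, f t ≠ 0)
    (he : ∀ᶠ t in nhdsWithin s {s}ᶜ, 0 < f t) : ∀ t ∈ Ioo a b, 0 < f t := by
  rcases sign_of_ne_zero hf h0 with h | h
  · exact h
  · exfalso
    have : ∃ t ∈ Ioo a b, 0 < f t := by
      rcases hs with rfl | rfl
      · have h1 := he.filter_mono (nhdsWithin_mono s (show Ioi s ⊆ {s}ᶜ from fun t ht => ne_of_gt ht))
        obtain ⟨t, h2, h3⟩ := (h1.and (Ioo_mem_nhdsGT hab)).exists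
        exact ⟨t, h3, h2⟩
      · have h1 := he.filter_mono (nhdsWithin_mono s (show Iio s ⊆ {s}ᶜ from fun t ht => ne_of_lt ht))
        obtain ⟨t, h2, h3⟩ := (h1.and (Ioo_mem_nhdsLT hab)).exists
        exact ⟨t, h3, h2⟩
    obtain ⟨t, ht, h2⟩ := this
    exact (h t ht).not_gt h2

/-- Let `(q, p)` be a closed curve with velocity `w • (A, B)`, `w > 0`, where no nontrivial
combination of `A` and `B` has three zeros and `σ (A' B - A B') > 0`. Such a curve is convex: the
chord `p = a + b q` joining its points with vertical tangent (or one such point and the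
starting point) separates the arcs on which `q` increases and decreases, so that
`σ A (p - a - b q) ≥ 0`. -/
lemma exists_chord {T σ : ℝ} (hT : 0 < T) {A B A' B' w p q : ℝ → ℝ}
    (hA : ContinuousOn A (Icc 0 T)) (hB : ContinuousOn B (Icc 0 T)) (hw : ContinuousOn w (Icc 0 T))
    (hA' : ∀ t ∈ Ioo 0 T, HasDerivAt A (A' t) t)
    (hz : ∀ l m : ℝ, ¬(l = 0 ∧ m = 0) → ∀ a ∈ Ico 0 T, ∀ b ∈ Ico 0 T, ∀ c ∈ Ico 0 T,
      l * A a + m * B a = 0 → l * A b + m * B b = 0 → l * A c + m * B c = 0 →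
      a = b ∨ a = c ∨ b = c)
    (hsign : ∀ t ∈ Ioo 0 T, 0 < σ * (A' t * B t - A t * B' t))
    (hwpos : ∀ t ∈ Ioo 0 T, 0 < w t)
    (hpc : ContinuousOn p (Icc 0 T)) (hqc : ContinuousOn q (Icc 0 T))
    (hp : ∀ t ∈ Ioo 0 T, HasDerivAt p (w t * B t) t)
    (hq : ∀ t ∈ Ioo 0 T, HasDerivAt q (w t * A t) t)
    (hpT : p 0 = p T) (hqT : q 0 = q T) :
    ∃ a b : ℝ, (∀ t ∈ Ioo 0 T, 0 ≤ σ * (A t * (p t - a - b * q t))) ∧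
      ∃ t ∈ Ioo 0 T, 0 < σ * (A t * (p t - a - b * q t)) := by
  obtain ⟨r, hr, hr0⟩ := exists_hasDerivAt_eq_zero hT hqc hqT hq
  have hAr : A r = 0 := (mul_eq_zero.1 hr0).resolve_left (ne_of_gt (hwpos r hr))
  -- If `A` has a single interior zero, the starting point serves as the other end of the chord.
  obtain ⟨s₁, s₂, h01, h12, h2T, hA1, hA2, hAz⟩ : ∃ s₁ s₂ : ℝ, 0 ≤ s₁ ∧ s₁ < s₂ ∧ s₂ < T ∧
      (s₁ = 0 ∨ A s₁ = 0) ∧ A s₂ = 0 ∧ ∀ t ∈ Ioo 0 T, A t = 0 → t = s₁ ∨ t = s₂ := by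
    by_cases hex : ∃ r' ∈ Ioo 0 T, A r' = 0 ∧ r' ≠ r
    · obtain ⟨r', hr', hAr', hne⟩ := hex
      have hall : ∀ t ∈ Ioo 0 T, A t = 0 → t = r ∨ t = r' := by
        intro t ht h
        rcases hz 1 0 (by simp) t ⟨ht.1.le, ht.2⟩ r ⟨hr.1.le, hr.2⟩ r' ⟨hr'.1.le, hr'.2⟩
          (by simpa) (by simpa) (by simpa) with h | h | h
        exacts [Or.inl h, Or.inr h, absurd h.symm hne]
      rcases lt_or_gt_of_ne hne with h | h
      · exact ⟨r', r, hr'.1.le, h, hr.2, Or.inr hAr', hAr, fun t ht h => (hall t ht h).symm⟩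
      · exact ⟨r, r', hr.1.le, h, hr'.2, Or.inr hAr, hAr', hall⟩
    · push Not at hex
      exact ⟨0, r, le_rfl, hr.1, hr.2, Or.inl rfl, hAr, fun t ht h => Or.inr (hex t ht h)⟩
  have hs2 : s₂ ∈ Ioo 0 T := ⟨h01.trans_lt h12, h2T⟩
  have hqne : q s₁ ≠ q s₂ := by
    intro h
    obtain ⟨t, ht, h0⟩ := exists_hasDerivAt_eq_zero h12
      (hqc.mono (Icc_subset_Icc h01 h2T.le)) h
      (fun t ht => hq t ⟨by linarith [ht.1], by linarith [ht.2]⟩)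
    have htI : t ∈ Ioo 0 T := ⟨by linarith [ht.1], by linarith [ht.2]⟩
    rcases hAz t htI ((mul_eq_zero.1 h0).resolve_left (hwpos t htI).ne') with h | h
    exacts [ht.1.ne' h, ht.2.ne h]
  obtain ⟨b, hb⟩ : ∃ b, b = (p s₂ - p s₁) / (q s₂ - q s₁) := ⟨_, rfl⟩
  obtain ⟨a, ha⟩ : ∃ a, a = p s₁ - b * q s₁ := ⟨_, rfl⟩
  set H : ℝ → ℝ := fun t => p t - a - b * q t with hH
  have hH1 : H s₁ = 0 := by simp [hH, ha]
  have hH2 : H s₂ = 0 := by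
    have : b * (q s₂ - q s₁) = p s₂ - p s₁ := by
      rw [hb, div_mul_cancel₀ _ (sub_ne_zero.2 hqne.symm)]
    simp only [hH, ha]
    linarith
  have hHc : ContinuousOn H (Icc 0 T) := (hpc.sub continuousOn_const).sub
    (continuousOn_const.mul hqc)
  have hHd : ∀ t ∈ Ioo 0 T, HasDerivAt H (w t * (B t - b * A t)) t := by
    intro t ht
    have := ((hp t ht).sub_const a).sub ((hq t ht).const_mul b)
    exact this.congr_deriv (by ring)
  have hzero : ∀ t ∈ Ico 0 T, H t = 0 → t = s₁ ∨ t = s₂ := by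
    intro t ht h
    by_contra hcon
    push Not at hcon
    obtain ⟨n1, n2⟩ := hcon
    have key : ∀ {t₁ t₂ t₃ : ℝ}, 0 ≤ t₁ → t₁ < t₂ → t₂ < t₃ → t₃ < T → H t₁ = 0 → H t₂ = 0 →
        H t₃ = 0 → False := by
      intro t₁ t₂ t₃ g0 g1 g2 g3 e1 e2 e3
      refine no_three_equal_values hHc hHd ?_ (by simp [hH, hpT, hqT]) ?_ g0 g1 g2 g3
        (e1.trans e2.symm) (e2.trans e3.symm)
      · exact (hw.mul (hB.sub (continuousOn_const.mul hA))).mono Ioo_subset_Icc_self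
      · intro x hx y hy z hz' fx fy fz
        refine hz (-b) 1 (by simp) x (Ioo_subset_Ico_self hx) y (Ioo_subset_Ico_self hy) z
          (Ioo_subset_Ico_self hz') ?_ ?_ ?_
        · linarith [(mul_eq_zero.1 fx).resolve_left (hwpos x hx).ne']
        · linarith [(mul_eq_zero.1 fy).resolve_left (hwpos y hy).ne']
        · linarith [(mul_eq_zero.1 fz).resolve_left (hwpos z hz').ne']
    rcases lt_or_gt_of_ne n1 with g | g
    · exact key ht.1 g h12 h2T h hH1 hH2
    · rcases lt_or_gt_of_ne n2 with g' | g'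
      · exact key h01 g g' h2T hH1 h hH2
      · exact key h01 h12 g' ht.2 hH1 hH2 h
  have hσ : σ ≠ 0 := by
    rintro rfl
    simpa using hsign r hr
  have hloc : ∀ s ∈ Ioo 0 T, A s = 0 → H s = 0 →
      ∀ᶠ t in nhdsWithin s {s}ᶜ, 0 < σ * (A t * H t) := by
    intro s hs hAs hHs
    refine eventually_mul_pos (hA' s hs) (hHd s hs) hAs hHs ?_
    have h1 := hsign s hs
    have h2 := mul_pos (hwpos s hs) h1
    rw [hAs] at h2 ⊢
    nlinarith
  have hGc : ContinuousOn (fun t => σ * (A t * H t)) (Icc 0 T) :=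
    continuousOn_const.mul (hA.mul hHc)
  have hGne : ∀ t ∈ Ioo 0 T, t ≠ s₁ → t ≠ s₂ → σ * (A t * H t) ≠ 0 := by
    intro t ht n1 n2
    refine mul_ne_zero hσ (mul_ne_zero ?_ ?_)
    · intro h
      rcases hAz t ht h with h | h
      exacts [n1 h, n2 h]
    · intro h
      rcases hzero t (Ioo_subset_Ico_self ht) h with h | h
      exacts [n1 h, n2 h]
  have hpos : ∀ t ∈ Ioo 0 T, t ≠ s₁ → t ≠ s₂ → 0 < σ * (A t * H t) := by
    intro t ht n1 n2
    rcases lt_or_gt_of_ne n1 with g | g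
    · have hs1 : s₁ ∈ Ioo 0 T := ⟨ht.1.trans g, h12.trans h2T⟩
      refine pos_of_ne_zero_of_eventually (a := 0) (b := s₁) hs1.1 (Or.inr rfl)
        (hGc.mono (fun u hu => ⟨hu.1.le, (hu.2.trans hs1.2).le⟩))
        (fun u hu => hGne u ⟨hu.1, hu.2.trans hs1.2⟩ hu.2.ne (hu.2.trans h12).ne)
        (hloc s₁ hs1 (hA1.resolve_left hs1.1.ne') hH1) t ⟨ht.1, g⟩
    · rcases lt_or_gt_of_ne n2 with g' | g'
      · exact pos_of_ne_zero_of_eventually (a := s₁) (b := s₂) h12 (Or.inr rfl)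
          (hGc.mono (fun u hu => ⟨h01.trans hu.1.le, (hu.2.trans h2T).le⟩))
          (fun u hu => hGne u ⟨h01.trans_lt hu.1, hu.2.trans h2T⟩ hu.1.ne' hu.2.ne)
          (hloc s₂ hs2 hA2 hH2) t ⟨g, g'⟩
      · exact pos_of_ne_zero_of_eventually (a := s₂) (b := T) h2T (Or.inl rfl)
          (hGc.mono (fun u hu => ⟨hs2.1.le.trans hu.1.le, hu.2.le⟩))
          (fun u hu => hGne u ⟨hs2.1.trans hu.1, hu.2⟩ (h12.trans hu.1).ne' hu.1.ne')
          (hloc s₂ hs2 hA2 hH2) t ⟨g', ht.2⟩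
  refine ⟨a, b, fun t ht => ?_, (s₂ + T) / 2, ?_, ?_⟩
  · by_cases n1 : t = s₁
    · subst n1
      simp only [hH] at hH1
      simp [hH1]
    by_cases n2 : t = s₂
    · subst n2
      simp only [hH] at hH2
      simp [hH2]
    exact (hpos t ht n1 n2).le
  · exact ⟨by linarith [hs2.1], by linarith⟩
  · have : s₂ < (s₂ + T) / 2 := by linarith
    exact hpos _ ⟨by linarith [hs2.1], by linarith⟩ (h12.trans this).ne' this.ne'

/-! ### Scalar linear equations and differences of solutions -/

lemma hasDerivWithinAt_primitive {T : ℝ} {g : ℝ → ℝ} (hg : ContinuousOn g (Icc 0 T)) :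
    ∀ t ∈ Icc 0 T, HasDerivWithinAt (fun s => ∫ r in (0:ℝ)..s, g r) (g t) (Icc 0 T) t := by
  intro t ht
  have : Fact (t ∈ Icc 0 T) := ⟨ht⟩
  refine integral_hasDerivWithinAt_right ?_
    (hg.stronglyMeasurableAtFilter_nhdsWithin measurableSet_Icc t) (hg t ht)
  refine ContinuousOn.intervalIntegrable (hg.mono ?_)
  rw [uIcc_of_le ht.1]
  exact Icc_subset_Icc le_rfl ht.2

lemma eq_mul_exp_of_linear {T : ℝ} {g y : ℝ → ℝ} (hg : ContinuousOn g (Icc 0 T))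
    (hy : ∀ t ∈ Icc 0 T, HasDerivWithinAt y (g t * y t) (Icc 0 T) t) :
    ∀ t ∈ Icc 0 T, y t = y 0 * Real.exp (∫ r in (0:ℝ)..t, g r) := by
  intro t ht
  have hT : 0 ≤ T := ht.1.trans ht.2
  have hd : ∀ s ∈ Icc 0 T, HasDerivWithinAt
      (fun s => y s * Real.exp (-∫ r in (0:ℝ)..s, g r)) 0 (Icc 0 T) s := by
    intro s hs
    have := (hy s hs).mul ((hasDerivWithinAt_primitive hg s hs).neg.exp)
    exact this.congr_deriv (by simp only [Pi.neg_apply]; ring)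
  rcases hT.eq_or_lt with h0 | h0
  · have : t = 0 := le_antisymm (h0 ▸ ht.2) ht.1
    simp [this]
  have := constant_of_derivWithin_zero (fun s hs => (hd s hs).differentiableWithinAt)
    (fun s hs => (hd s (Ico_subset_Icc_self hs)).derivWithin
      (uniqueDiffOn_Icc h0 s (Ico_subset_Icc_self hs))) t ht
  simp only [integral_same, neg_zero, Real.exp_zero, mul_one] at this
  rw [← this, mul_assoc, ← Real.exp_add]
  simp

lemma AbelSol.continuousOn {A B : ℝ → ℝ} {T : ℝ} {x : ℝ → ℝ} (hx : AbelSol A B T x) :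
    ContinuousOn x (Icc 0 T) := fun t ht => (hx t ht).continuousWithinAt

/-- The difference quotient `(f(z) - f(x)) / (z - x)` of the right-hand side
`f(x) = A x³ + B x²` of the Abel equation. -/
def abelQuot (A B x z : ℝ → ℝ) (t : ℝ) : ℝ :=
  A t * (z t ^ 2 + z t * x t + x t ^ 2) + B t * (z t + x t)

lemma continuousOn_abelQuot {A B x z : ℝ → ℝ} {s : Set ℝ} (hA : ContinuousOn A s)
    (hB : ContinuousOn B s) (hx : ContinuousOn x s) (hz : ContinuousOn z s) :
    ContinuousOn (abelQuot A B x z) s :=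
  (hA.mul (((hz.pow 2).add (hz.mul hx)).add (hx.pow 2))).add (hB.mul (hz.add hx))

lemma abelSol_sub {A B : ℝ → ℝ} {T : ℝ} {x z : ℝ → ℝ} (hA : ContinuousOn A (Icc 0 T))
    (hB : ContinuousOn B (Icc 0 T)) (hx : AbelSol A B T x) (hz : AbelSol A B T z) :
    ∀ t ∈ Icc 0 T, z t - x t =
      (z 0 - x 0) * Real.exp (∫ r in (0:ℝ)..t, abelQuot A B x z r) := by
  refine eq_mul_exp_of_linear (y := fun t => z t - x t)
    (continuousOn_abelQuot hA hB hx.continuousOn hz.continuousOn) ?_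
  intro t ht
  exact ((hz t ht).sub (hx t ht)).congr_deriv (by simp only [abelQuot]; ring)

/-- Solutions starting close to `x 0` are uniformly bounded, being squeezed between two of them. -/
lemma exists_uniform_bound {A B : ℝ → ℝ} {T : ℝ} {x : ℝ → ℝ} (hA : ContinuousOn A (Icc 0 T))
    (hB : ContinuousOn B (Icc 0 T)) {U : Set ℝ} {v : ℝ} (hU : U ∈ nhds v)
    {z : ℝ → ℝ → ℝ} (hz : ∀ y ∈ U, AbelSol A B T (z y) ∧ z y 0 = y) (hx : AbelSol A B T x) :
    ∃ M, 0 ≤ M ∧ (∀ᶠ y in nhds v, y ∈ U ∧ ∀ t ∈ Icc 0 T, |z y t| ≤ M) ∧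
      ∀ t ∈ Icc 0 T, |A t| ≤ M ∧ |B t| ≤ M ∧ |x t| ≤ M := by
  obtain ⟨δ, hδ, hball⟩ := Metric.mem_nhds_iff.1 hU
  have hin : ∀ y, |y - v| ≤ δ / 2 → y ∈ U := fun y hy => hball (by
    rw [Metric.mem_ball, Real.dist_eq]; linarith)
  have hl := hz (v - δ / 2) (hin _ (by simp [abs_of_pos (half_pos hδ)]))
  have hr := hz (v + δ / 2) (hin _ (by simp [abs_of_pos (half_pos hδ)]))
  obtain ⟨a, ha⟩ := isCompact_Icc.exists_bound_of_continuousOn hl.1.continuousOn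
  obtain ⟨b, hb⟩ := isCompact_Icc.exists_bound_of_continuousOn hr.1.continuousOn
  obtain ⟨c, hc⟩ := isCompact_Icc.exists_bound_of_continuousOn hA
  obtain ⟨d, hd⟩ := isCompact_Icc.exists_bound_of_continuousOn hB
  obtain ⟨e, he⟩ := isCompact_Icc.exists_bound_of_continuousOn hx.continuousOn
  simp only [Real.norm_eq_abs] at ha hb hc hd he
  have q1 := le_abs_self a
  have q2 := le_abs_self b
  have q3 := le_abs_self c
  have q4 := le_abs_self d
  have q5 := le_abs_self e
  have w1 := abs_nonneg a
  have w2 := abs_nonneg b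
  have w3 := abs_nonneg c
  have w4 := abs_nonneg d
  have w5 := abs_nonneg e
  refine ⟨|a| + |b| + |c| + |d| + |e|, by positivity, ?_, fun t ht =>
    ⟨by linarith [hc t ht], by linarith [hd t ht], by linarith [he t ht]⟩⟩
  filter_upwards [Metric.closedBall_mem_nhds v (half_pos hδ)] with y hy
  rw [Metric.mem_closedBall, Real.dist_eq] at hy
  have hyU := hin y hy
  refine ⟨hyU, fun t ht => ?_⟩
  have hzy := hz y hyU
  have hy' := abs_le.1 hy
  have h1 := abelSol_sub hA hB hl.1 hzy.1 t ht
  have h2 := abelSol_sub hA hB hzy.1 hr.1 t ht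
  rw [hl.2, hzy.2] at h1
  rw [hr.2, hzy.2] at h2
  have h3 : 0 ≤ z y t - z (v - δ / 2) t := by
    rw [h1]; exact mul_nonneg (by linarith) (Real.exp_pos _).le
  have h4 : 0 ≤ z (v + δ / 2) t - z y t := by
    rw [h2]; exact mul_nonneg (by linarith) (Real.exp_pos _).le
  have h5 := abs_le.1 (ha t ht)
  have h6 := abs_le.1 (hb t ht)
  rw [abs_le]
  constructor <;> linarith

/-! ### The first two derivatives of the Poincaré map -/

lemma tendsto_integral_of_bounded {l : Filter ℝ} [l.IsCountablyGenerated] {s C : ℝ}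
    (hs : 0 ≤ s) {F : ℝ → ℝ → ℝ} {f : ℝ → ℝ}
    (hc : ∀ᶠ y in l, ContinuousOn (F y) (Icc 0 s)) (hb : ∀ᶠ y in l, ∀ t ∈ Icc 0 s, |F y t| ≤ C)
    (hlim : ∀ t ∈ Icc 0 s, Filter.Tendsto (fun y => F y t) l (nhds (f t))) :
    Filter.Tendsto (fun y => ∫ t in (0:ℝ)..s, F y t) l (nhds (∫ t in (0:ℝ)..s, f t)) := by
  have hsub : uIoc 0 s ⊆ Icc 0 s := by
    rw [uIoc_of_le hs]; exact Ioc_subset_Icc_self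
  refine tendsto_integral_filter_of_dominated_convergence (fun _ => C) ?_ ?_ (by simp) ?_
  · filter_upwards [hc] with y hy
    exact (hy.mono hsub).aestronglyMeasurable measurableSet_uIoc
  · filter_upwards [hb] with y hy
    exact Filter.Eventually.of_forall fun t ht => hy t (hsub ht)
  · exact Filter.Eventually.of_forall fun t ht => hlim t (hsub ht)

/-- A second order expansion at a fixed point with multiplier `1`, for a map that is twice
differentiable at that point only. -/
lemma tendsto_second_order {P P' : ℝ → ℝ} {U : Set ℝ} {v p₂ : ℝ} (hU : U ∈ nhds v)
    (hfix : P v = v) (hP' : ∀ y ∈ U, HasDerivAt P (P' y) y) (h1 : P' v = 1)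
    (hp₂ : HasDerivAt P' p₂ v) :
    Filter.Tendsto (fun y => (P y - y) / (y - v) ^ 2) (nhdsWithin v {v}ᶜ) (nhds (p₂ / 2)) := by
  refine HasDerivAt.lhopital_zero_nhdsNE (f' := fun y => P' y - 1) (g' := fun y => 2 * (y - v))
    ?_ ?_ ?_ ?_ ?_ ?_
  · filter_upwards [nhdsWithin_le_nhds hU] with y hy
    exact (hP' y hy).sub (hasDerivAt_id y)
  · refine Filter.Eventually.of_forall fun y => ?_
    exact (((hasDerivAt_id y).sub_const v).pow 2).congr_deriv (by simp)
  · filter_upwards [self_mem_nhdsWithin] with y hy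
    exact mul_ne_zero two_ne_zero (sub_ne_zero.2 hy)
  · have : ContinuousAt (fun y => P y - y) v :=
      (hP' v (mem_of_mem_nhds hU)).continuousAt.sub continuousAt_id
    have h := this.tendsto
    rw [hfix, sub_self] at h
    exact h.mono_left nhdsWithin_le_nhds
  · have : ContinuousAt (fun y => (y - v) ^ 2) v := by fun_prop
    have h := this.tendsto
    simp only [sub_self, ne_eq, OfNat.ofNat_ne_zero, not_false_eq_true, zero_pow] at h
    exact h.mono_left nhdsWithin_le_nhds
  · refine ((hasDerivAt_iff_tendsto_slope.1 hp₂).div_const 2).congr fun y => ?_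
    rw [slope_def_field, h1, div_div, mul_comm]

/-- The variational formulas: with `u = exp ∫ (3 A x² + 2 B x)` one has `u T = P' = 1` and
`P'' = 2 ∫ (3 A x + B) u`. They come from the exact identity
`P y - P v = (y - v) exp ∫ abelQuot`, in which the exponent is expanded to first order in `y - v`. -/
lemma poincare_derivs {T : ℝ} (hT : 0 < T) {A B : ℝ → ℝ} (hA : ContinuousOn A (Icc 0 T))
    (hB : ContinuousOn B (Icc 0 T)) {x : ℝ → ℝ} (hx : ClosedSol A B T x)
    {P P' : ℝ → ℝ} {U : Set ℝ} (hU : U ∈ nhds (x 0)) (hPoin : IsPoincareOn A B T P U)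
    (hfix : P (x 0) = x 0) (hP' : ∀ y ∈ U, HasDerivAt P (P' y) y) (hone : P' (x 0) = 1)
    {p₂ : ℝ} (hp₂ : HasDerivAt P' p₂ (x 0)) :
    (∫ r in (0:ℝ)..T, (3 * A r * x r ^ 2 + 2 * B r * x r)) = 0 ∧
    p₂ = 2 * ∫ t in (0:ℝ)..T, (3 * A t * x t + B t) *
      Real.exp (∫ r in (0:ℝ)..t, (3 * A r * x r ^ 2 + 2 * B r * x r)) := by
  obtain ⟨hxs, hxT⟩ := hx
  have hxc := hxs.continuousOn
  choose! z hz using hPoin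
  have hzs : ∀ y ∈ U, AbelSol A B T (z y) ∧ z y 0 = y := fun y hy => ⟨(hz y hy).1, (hz y hy).2.1⟩
  obtain ⟨M, hM0, hMz, hM⟩ := exists_uniform_bound hA hB hU hzs hxs
  set v := x 0 with hv
  set l := nhdsWithin v {v}ᶜ with hl
  set K : ℝ → ℝ → ℝ := fun y => abelQuot A B x (z y) with hK
  set K0 : ℝ → ℝ := fun r => 3 * A r * x r ^ 2 + 2 * B r * x r with hK0
  set D : ℝ → ℝ → ℝ := fun y t => Real.exp (∫ r in (0:ℝ)..t, K y r) with hD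
  set u : ℝ → ℝ := fun t => Real.exp (∫ r in (0:ℝ)..t, K0 r) with hu
  set R : ℝ → ℝ → ℝ := fun y t => (A t * (3 * x t + (y - v) * D y t) + B t) * D y t with hR
  have hMz' : ∀ᶠ y in l, y ∈ U ∧ ∀ t ∈ Icc 0 T, |z y t| ≤ M :=
    hMz.filter_mono nhdsWithin_le_nhds
  have hmain : ∀ y ∈ U, ∀ t ∈ Icc 0 T, z y t - x t = (y - v) * D y t := by
    intro y hy t ht
    have := abelSol_sub hA hB hxs (hzs y hy).1 t ht
    rwa [(hzs y hy).2] at this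
  have hKc : ∀ y ∈ U, ContinuousOn (K y) (Icc 0 T) := fun y hy =>
    continuousOn_abelQuot hA hB hxc (hzs y hy).1.continuousOn
  have hK0c : ContinuousOn K0 (Icc 0 T) := by
    simp only [hK0]; fun_prop
  have hDc : ∀ y ∈ U, ContinuousOn (D y) (Icc 0 T) := fun y hy t ht =>
    ((hasDerivWithinAt_primitive (hKc y hy) t ht).exp).continuousWithinAt
  have hRc : ∀ y ∈ U, ContinuousOn (R y) (Icc 0 T) := fun y hy => by
    have := hDc y hy
    simp only [hR]; fun_prop
  -- `N` bounds `K y` and `exp (N T)` bounds `D y`, uniformly for `y` near `v`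
  set N := M * (M ^ 2 + M * M + M ^ 2) + M * (M + M) with hN
  have hN0 : 0 ≤ N := by positivity
  have hKb : ∀ᶠ y in l, ∀ t ∈ Icc 0 T, |K y t| ≤ N := by
    filter_upwards [hMz'] with y hy t ht
    obtain ⟨a1, a2, a3⟩ := hM t ht
    have a4 := hy.2 t ht
    calc |K y t| ≤ |A t| * (|z y t| ^ 2 + |z y t| * |x t| + |x t| ^ 2)
          + |B t| * (|z y t| + |x t|) := by
          simp only [hK, abelQuot]
          refine (abs_add_le _ _).trans ?_
          rw [abs_mul, abs_mul]
          gcongr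
          · refine (abs_add_le _ _).trans ?_
            rw [abs_pow]
            gcongr
            refine (abs_add_le _ _).trans ?_
            rw [abs_pow, abs_mul]
          · exact abs_add_le _ _
      _ ≤ N := by rw [hN]; gcongr
  have hDb : ∀ᶠ y in l, ∀ t ∈ Icc 0 T, |D y t| ≤ Real.exp (N * T) := by
    filter_upwards [hKb] with y hy t ht
    rw [hD, abs_of_pos (Real.exp_pos _), Real.exp_le_exp]
    have := norm_integral_le_of_norm_le_const (a := 0) (b := t) (C := N) (f := K y) (fun r hr => by
      rw [uIoc_of_le ht.1] at hr
      exact hy r ⟨hr.1.le, hr.2.trans ht.2⟩)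
    rw [sub_zero, abs_of_nonneg ht.1] at this
    exact (le_abs_self _).trans (this.trans (by gcongr; exact ht.2))
  have hh : Filter.Tendsto (fun y => y - v) l (nhds 0) := by
    have : ContinuousAt (fun y : ℝ => y - v) v := by fun_prop
    have h := this.tendsto
    rw [sub_self] at h
    exact h.mono_left nhdsWithin_le_nhds
  have hhD : ∀ t ∈ Icc 0 T, Filter.Tendsto (fun y => (y - v) * D y t) l (nhds 0) := by
    intro t ht
    refine hh.zero_mul_isBoundedUnder_le ⟨Real.exp (N * T), ?_⟩
    rw [Filter.eventually_map]
    filter_upwards [hDb] with y hy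
    exact hy t ht
  have hzlim : ∀ t ∈ Icc 0 T, Filter.Tendsto (fun y => z y t) l (nhds (x t)) := by
    intro t ht
    have := (hhD t ht).add_const (x t)
    rw [zero_add] at this
    refine this.congr' ?_
    filter_upwards [hMz'] with y hy
    rw [← hmain y hy.1 t ht]
    ring
  have hKlim : ∀ t ∈ Icc 0 T, Filter.Tendsto (fun y => K y t) l (nhds (K0 t)) := by
    intro t ht
    have h := hzlim t ht
    have := ((((h.pow 2).add (h.mul_const (x t))).add_const (x t ^ 2)).const_mul (A t)).add
      ((h.add_const (x t)).const_mul (B t))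
    rwa [show A t * (x t ^ 2 + x t * x t + x t ^ 2) + B t * (x t + x t) = K0 t by
      simp only [hK0]; ring] at this
  have hIlim : ∀ t ∈ Icc 0 T, Filter.Tendsto (fun y => ∫ r in (0:ℝ)..t, K y r) l
      (nhds (∫ r in (0:ℝ)..t, K0 r)) := by
    intro t ht
    have hsub : Icc 0 t ⊆ Icc 0 T := Icc_subset_Icc le_rfl ht.2
    refine tendsto_integral_of_bounded (C := N) ht.1 ?_ ?_ (fun r hr => hKlim r (hsub hr))
    · filter_upwards [hMz'] with y hy
      exact (hKc y hy.1).mono hsub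
    · filter_upwards [hKb] with y hy r hr
      exact hy r (hsub hr)
  have hDlim : ∀ t ∈ Icc 0 T, Filter.Tendsto (fun y => D y t) l (nhds (u t)) := fun t ht =>
    (Real.continuous_exp.tendsto _).comp (hIlim t ht)
  have hRlim : ∀ t ∈ Icc 0 T, Filter.Tendsto (fun y => R y t) l
      (nhds ((3 * A t * x t + B t) * u t)) := by
    intro t ht
    have := ((((hhD t ht).const_add (3 * x t)).const_mul (A t)).add_const (B t)).mul (hDlim t ht)
    convert this using 2
    ring
  have hRb : ∀ᶠ y in l, ∀ t ∈ Icc 0 T,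
      |R y t| ≤ (M * (3 * M + 1 * Real.exp (N * T)) + M) * Real.exp (N * T) := by
    filter_upwards [hDb, hh.eventually (Metric.ball_mem_nhds 0 one_pos)] with y hy hy1 t ht
    obtain ⟨a1, a2, a3⟩ := hM t ht
    have a4 := hy t ht
    have a5 : |y - v| ≤ 1 := by
      rw [dist_zero_right] at hy1
      exact hy1.le
    calc |R y t| ≤ (|A t| * (3 * |x t| + |y - v| * |D y t|) + |B t|) * |D y t| := by
          simp only [hR]
          rw [abs_mul]
          gcongr
          refine (abs_add_le _ _).trans ?_
          rw [abs_mul]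
          gcongr
          refine (abs_add_le _ _).trans ?_
          rw [abs_mul, abs_mul, abs_of_pos (three_pos : (0:ℝ) < 3)]
      _ ≤ _ := by gcongr
  have hJ : Filter.Tendsto (fun y => ∫ t in (0:ℝ)..T, R y t) l
      (nhds (∫ t in (0:ℝ)..T, (3 * A t * x t + B t) * u t)) := by
    refine tendsto_integral_of_bounded hT.le ?_ hRb hRlim
    filter_upwards [hMz'] with y hy
    exact hRc y hy.1
  have hTm : T ∈ Icc 0 T := right_mem_Icc.2 hT.le
  have hPD : ∀ᶠ y in l, P y - v = (y - v) * D y T := by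
    filter_upwards [hMz'] with y hy
    rw [← hmain y hy.1 T hTm, (hz y hy.1).2.2, ← hxT]
  have huT : u T = 1 := by
    have h1 := hasDerivAt_iff_tendsto_slope.1 (hP' v (mem_of_mem_nhds hU))
    rw [hone] at h1
    refine tendsto_nhds_unique (hDlim T hTm) (h1.congr' ?_)
    filter_upwards [hPD, self_mem_nhdsWithin] with y hy hne
    rw [slope_def_field, hfix, hy, mul_div_cancel_left₀ _ (sub_ne_zero.2 hne)]
  have hΛ0 : ∫ r in (0:ℝ)..T, K0 r = 0 := by
    simpa [hu] using huT
  refine ⟨hΛ0, ?_⟩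
  have hii : ∀ {f : ℝ → ℝ}, ContinuousOn f (Icc 0 T) →
      IntervalIntegrable f MeasureTheory.volume 0 T := fun hf =>
    ContinuousOn.intervalIntegrable (by rwa [uIcc_of_le hT.le])
  have hΛ : ∀ y ∈ U, ∫ r in (0:ℝ)..T, K y r = (y - v) * ∫ r in (0:ℝ)..T, R y r := by
    intro y hy
    have e : ∫ r in (0:ℝ)..T, K y r = (∫ r in (0:ℝ)..T, K y r) - ∫ r in (0:ℝ)..T, K0 r := by
      rw [hΛ0, sub_zero]
    rw [e, ← integral_sub (hii (hKc y hy)) (hii hK0c), ← integral_const_mul]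
    refine integral_congr fun t ht => ?_
    rw [uIcc_of_le hT.le] at ht
    have hzt : z y t = x t + (y - v) * D y t := by linarith [hmain y hy t ht]
    simp only [hK, abelQuot, hK0, hR]
    rw [hzt]
    ring
  have hexp : Filter.Tendsto (fun y => (∫ r in (0:ℝ)..T, R y r) *
      dslope Real.exp 0 ((y - v) * ∫ r in (0:ℝ)..T, R y r)) l
      (nhds (∫ t in (0:ℝ)..T, (3 * A t * x t + B t) * u t)) := by
    have hc : ContinuousAt (dslope Real.exp 0) 0 :=
      continuousAt_dslope_same.2 Real.differentiableAt_exp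
    have h0 := hh.mul hJ
    rw [zero_mul] at h0
    have := hJ.mul (hc.tendsto.comp h0)
    simpa [dslope_same] using this
  have h2 : p₂ / 2 = ∫ t in (0:ℝ)..T, (3 * A t * x t + B t) * u t := by
    refine tendsto_nhds_unique ((tendsto_second_order hU hfix hP' hone hp₂)) (hexp.congr' ?_)
    filter_upwards [hMz', hPD, self_mem_nhdsWithin] with y hy hPy hne
    have hne' : y - v ≠ 0 := sub_ne_zero.2 hne
    have e1 := sub_smul_dslope Real.exp 0 ((y - v) * ∫ r in (0:ℝ)..T, R y r)
    rw [sub_zero, smul_eq_mul, Real.exp_zero, ← hΛ y hy.1] at e1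
    rw [← hΛ y hy.1, eq_div_iff (pow_ne_zero 2 hne')]
    have e2 : P y - y = (y - v) * (D y T - 1) := by linarith
    rw [e2]
    simp only [hD]
    rw [← e1]
    nth_rewrite 2 [hΛ y hy.1]
    ring
  linarith

/-! ### The sign of the second derivative -/

lemma IsETAcc1.no_three_zeros {E : Set ℝ} {A B : ℝ → ℝ} (h : IsETAcc1 E A B) (l m : ℝ)
    (hlm : ¬(l = 0 ∧ m = 0)) : ∀ a ∈ E, ∀ b ∈ E, ∀ c ∈ E, l * A a + m * B a = 0 →
      l * A b + m * B b = 0 → l * A c + m * B c = 0 → a = b ∨ a = c ∨ b = c := by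
  intro a ha b hb c hc fa fb fc
  by_contra hcon
  push Not at hcon
  obtain ⟨hab, hac, hbc⟩ := hcon
  have := h.2 l m hlm {a, b, c} (fun _ => 1) (by
    intro t ht
    simp only [Finset.mem_insert, Finset.mem_singleton] at ht
    refine ⟨?_, le_rfl, ?_⟩
    · rcases ht with rfl | rfl | rfl <;> assumption
    · intro k hk
      obtain rfl : k = 0 := by omega
      rw [iteratedDerivWithin_zero]
      rcases ht with rfl | rfl | rfl <;> assumption)
  rw [Finset.sum_const, Finset.card_eq_three.2 ⟨a, b, c, hab, hac, hbc, rfl⟩] at this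
  norm_num at this

/-- With `E = exp ∫ A x²`, the curve `(q, p) = (-1/E, x/E)` has velocity `(x²/E) • (A, B)`, and
`(3 A x + B) x² E` differs from `A x² E² (p - a - b q)` by an exact derivative, for
all `a`, `b`. Choosing the chord of `exists_chord` makes the latter of one sign. -/
lemma integral_sign {T σ : ℝ} (hT : 0 < T) {A B A' B' : ℝ → ℝ}
    (hA : ContinuousOn A (Icc 0 T)) (hB : ContinuousOn B (Icc 0 T))
    (hA' : ∀ t ∈ Ioo 0 T, HasDerivAt A (A' t) t)
    (hET : IsETAcc1 (Ico 0 T) A B)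
    (hsign : ∀ t ∈ Ioo 0 T, 0 < σ * (A' t * B t - A t * B' t))
    {x : ℝ → ℝ} (hx : ClosedSol A B T x) (hx0 : x 0 ≠ 0)
    (hmult : (∫ r in (0:ℝ)..T, (3 * A r * x r ^ 2 + 2 * B r * x r)) = 0) :
    0 < σ * ∫ t in (0:ℝ)..T, (3 * A t * x t + B t) *
      Real.exp (∫ r in (0:ℝ)..t, (3 * A r * x r ^ 2 + 2 * B r * x r)) := by
  obtain ⟨hxs, hxT⟩ := hx
  have hxc := hxs.continuousOn
  have hxne : ∀ t ∈ Icc 0 T, x t ≠ 0 := by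
    intro t ht
    rw [eq_mul_exp_of_linear (g := fun t => A t * x t ^ 2 + B t * x t) (by fun_prop)
      (fun s hs => (hxs s hs).congr_deriv (by ring)) t ht]
    exact mul_ne_zero hx0 (Real.exp_pos _).ne'
  have hgc : ContinuousOn (fun t => A t * x t ^ 2) (Icc 0 T) := by fun_prop
  set E : ℝ → ℝ := fun t => Real.exp (∫ r in (0:ℝ)..t, A r * x r ^ 2) with hE
  have hEpos : ∀ t, 0 < E t := fun t => Real.exp_pos _
  have hEd : ∀ t ∈ Icc 0 T, HasDerivWithinAt E (A t * x t ^ 2 * E t) (Icc 0 T) t := fun t ht =>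
    ((hasDerivWithinAt_primitive hgc t ht).exp).congr_deriv (by rw [hE]; ring)
  have hEc : ContinuousOn E (Icc 0 T) := fun t ht => (hEd t ht).continuousWithinAt
  have hE0 : E 0 = 1 := by simp [hE]
  have hu : ∀ t ∈ Icc 0 T, x t ^ 2 * E t = x 0 ^ 2 *
      Real.exp (∫ r in (0:ℝ)..t, (3 * A r * x r ^ 2 + 2 * B r * x r)) := by
    intro t ht
    have := eq_mul_exp_of_linear (y := fun t => x t ^ 2 * E t)
      (g := fun r => 3 * A r * x r ^ 2 + 2 * B r * x r) (by fun_prop)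
      (fun s hs => (((hxs s hs).pow 2).mul (hEd s hs)).congr_deriv (by
        simp only [Pi.pow_apply]; push_cast; ring)) t ht
    simpa [hE0] using this
  have hET1 : E T = 1 := by
    have := hu T (right_mem_Icc.2 hT.le)
    rw [hmult, Real.exp_zero, ← hxT] at this
    exact mul_left_cancel₀ (pow_ne_zero 2 hx0) this
  have hint : ∀ t ∈ Ioo 0 T, Icc 0 T ∈ nhds t := fun t ht => Icc_mem_nhds ht.1 ht.2
  have hxd : ∀ t ∈ Ioo 0 T, HasDerivAt x (A t * x t ^ 3 + B t * x t ^ 2) t := fun t ht =>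
    (hxs t (Ioo_subset_Icc_self ht)).hasDerivAt (hint t ht)
  have hEd' : ∀ t ∈ Ioo 0 T, HasDerivAt E (A t * x t ^ 2 * E t) t := fun t ht =>
    (hEd t (Ioo_subset_Icc_self ht)).hasDerivAt (hint t ht)
  obtain ⟨a, b, hnn, τ, hτ, hτpos⟩ := exists_chord (σ := σ) hT (w := fun t => x t ^ 2 / E t)
    (p := fun t => x t / E t) (q := fun t => -(E t)⁻¹) hA hB
    ((hxc.pow 2).div hEc fun t _ => (hEpos t).ne') hA' hET.no_three_zeros hsign
    (fun t ht => div_pos (sq_pos_iff.2 (hxne t (Ioo_subset_Icc_self ht))) (hEpos t))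
    (hxc.div hEc fun t _ => (hEpos t).ne') (hEc.inv₀ fun t _ => (hEpos t).ne').neg
    (fun t ht => ((hxd t ht).div (hEd' t ht) (hEpos t).ne').congr_deriv (by
      have := (hEpos t).ne'
      field_simp
      ring))
    (fun t ht => ((hEd' t ht).inv (hEpos t).ne').neg.congr_deriv (by
      have := (hEpos t).ne'
      field_simp))
    (by simp [hE0, hET1, hxT]) (by simp [hE0, hET1])
  set G : ℝ → ℝ := fun t => A t * x t ^ 2 * (x t * E t - a * E t ^ 2 + b * E t) with hG
  have hGc : ContinuousOn G (Icc 0 T) := by simp only [hG]; fun_prop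
  have hGeq : ∀ t, σ * G t = σ * (A t * (x t / E t - a - b * -(E t)⁻¹)) * (x t ^ 2 * E t ^ 2) := by
    intro t
    have := (hEpos t).ne'
    simp only [hG]
    field_simp
    ring
  have hGpos : 0 < ∫ t in (0:ℝ)..T, σ * G t := by
    refine integral_pos hT (continuousOn_const.mul hGc) ?_ ⟨τ, Ioo_subset_Icc_self hτ, ?_⟩
    · intro t ht
      refine le_on_closure (s := Ioo 0 T) (f := fun _ => 0) (g := fun t => σ * G t)
        (fun s hs => ?_) continuousOn_const ?_ ?_
      · rw [hGeq]
        exact mul_nonneg (hnn s hs) (by positivity)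
      · rw [closure_Ioo hT.ne]
        exact continuousOn_const.mul hGc
      · rw [closure_Ioo hT.ne]
        exact Ioc_subset_Icc_self ht
    · rw [hGeq]
      have h1 := hEpos τ
      have h2 := hxne τ (Ioo_subset_Icc_self hτ)
      exact mul_pos hτpos (by positivity)
  have hii : ∀ {f : ℝ → ℝ}, ContinuousOn f (Icc 0 T) →
      IntervalIntegrable f MeasureTheory.volume 0 T := fun hf =>
    ContinuousOn.intervalIntegrable (by rwa [uIcc_of_le hT.le])
  set L : ℝ → ℝ := fun t => (3 * A t * x t + B t) * (x t ^ 2 * E t) with hL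
  have hLc : ContinuousOn L (Icc 0 T) := by simp only [hL]; fun_prop
  have hexact : ∫ t in (0:ℝ)..T, (L t - G t) = 0 := by
    have := integral_eq_sub_of_hasDerivAt_of_le (f := fun t => x t * E t + a / 2 * E t ^ 2 - b * E t)
      (f' := fun t => L t - G t) hT.le (by fun_prop)
      (fun t ht => ((((hxd t ht).mul (hEd' t ht)).add (((hEd' t ht).pow 2).const_mul (a / 2))).sub
        ((hEd' t ht).const_mul b)).congr_deriv (by
          simp only [hL, hG]; push_cast; ring))
      (hii (hLc.sub hGc))
    rw [this, hE0, hET1, hxT]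
    ring
  rw [integral_sub (hii hLc) (hii hGc)] at hexact
  have hLu : ∫ t in (0:ℝ)..T, L t = x 0 ^ 2 * ∫ t in (0:ℝ)..T, (3 * A t * x t + B t) *
      Real.exp (∫ r in (0:ℝ)..t, (3 * A r * x r ^ 2 + 2 * B r * x r)) := by
    rw [← integral_const_mul]
    refine integral_congr fun t ht => ?_
    rw [uIcc_of_le hT.le] at ht
    simp only [hL]
    rw [hu t ht]
    ring
  rw [integral_const_mul] at hGpos
  have hx2 : 0 < x 0 ^ 2 := by positivity
  refine pos_of_mul_pos_right (a := x 0 ^ 2) ?_ hx2.le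
  rw [mul_left_comm, ← hLu, sub_eq_zero.1 hexact]
  exact hGpos

/-- Under (D.2), every non-zero limit cycle has multiplicity at most two:
if `x` is a non-zero closed solution with `P'(x 0) = 1`, then `P''(x 0) ≠ 0`; moreover
`P''(x 0) > 0` when `A'B − AB' > 0` on `[0,T)` and `P''(x 0) < 0` when
`A'B − AB' < 0` on `[0,T)`. -/
theorem abel_D2_nonzero_limit_cycle_multiplicity_at_most_two
    (T : ℝ) (hT : 0 < T) (A B A' B' : ℝ → ℝ)
    (hAc : ContinuousOn A (Set.Icc (0:ℝ) T))
    (hBc : ContinuousOn B (Set.Icc (0:ℝ) T))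
    (hA2 : ContDiffOn ℝ 2 A (Set.Ico (0:ℝ) T))
    (hB2 : ContDiffOn ℝ 2 B (Set.Ico (0:ℝ) T))
    (hA' : ∀ t ∈ Set.Ico (0:ℝ) T, HasDerivWithinAt A (A' t) (Set.Ico (0:ℝ) T) t)
    (hB' : ∀ t ∈ Set.Ico (0:ℝ) T, HasDerivWithinAt B (B' t) (Set.Ico (0:ℝ) T) t)
    (hET : IsETAcc1 (Set.Ico (0:ℝ) T) A B)
    (hsign : (∀ t ∈ Set.Ico (0:ℝ) T, 0 < A' t * B t - A t * B' t) ∨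
             (∀ t ∈ Set.Ico (0:ℝ) T, A' t * B t - A t * B' t < 0))
    (x : ℝ → ℝ) (hx : ClosedSol A B T x) (hx0 : x 0 ≠ 0)
    (P P' : ℝ → ℝ) (U : Set ℝ) (hU : U ∈ nhds (x 0))
    (hPoin : IsPoincareOn A B T P U) (hPfix : P (x 0) = x 0)
    (hP' : ∀ y ∈ U, HasDerivAt P (P' y) y) (hP'one : P' (x 0) = 1)
    (p₂ : ℝ) (hp₂ : HasDerivAt P' p₂ (x 0)) :
    p₂ ≠ 0 ∧
    ((∀ t ∈ Set.Ico (0:ℝ) T, 0 < A' t * B t - A t * B' t) → 0 < p₂) ∧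
    ((∀ t ∈ Set.Ico (0:ℝ) T, A' t * B t - A t * B' t < 0) → p₂ < 0) := by
  have hA'' : ∀ t ∈ Ioo 0 T, HasDerivAt A (A' t) t := fun t ht =>
    (hA' t (Ioo_subset_Ico_self ht)).hasDerivAt (Ico_mem_nhds ht.1 ht.2)
  obtain ⟨hmult, hp⟩ := poincare_derivs hT hAc hBc hx hU hPoin hPfix hP' hP'one hp₂
  have hpos : (∀ t ∈ Set.Ico (0:ℝ) T, 0 < A' t * B t - A t * B' t) → 0 < p₂ := by
    intro h
    have := integral_sign (B' := B') (σ := 1) hT hAc hBc hA'' hET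
      (fun t ht => by simpa using h t (Ioo_subset_Ico_self ht)) hx hx0 hmult
    linarith
  have hneg : (∀ t ∈ Set.Ico (0:ℝ) T, A' t * B t - A t * B' t < 0) → p₂ < 0 := by
    intro h
    have := integral_sign (B' := B') (σ := -1) hT hAc hBc hA'' hET
      (fun t ht => by linarith [h t (Ioo_subset_Ico_self ht)]) hx hx0 hmult
    linarith
  exact ⟨hsign.elim (fun h => (hpos h).ne') (fun h => (hneg h).ne), hpos, hneg⟩
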